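/- Let 1 ≤ g ≤ 4 and Ω ∈ 𝔥_g. Then ∑_{δ even} Ξ_G^{(g)}[δ](Ω) = 2^{−g} ∑_{i=0}^{g} (−1)^i 2^{i(i+1)/2} S_{i,2^{4−i}}(Ω), where the sum on the left runs over all even theta characteristics δ ∈ ({0,1}^g)² and S_{i,s}(Ω) := ∑_{A ⊆ F₂^{2g} affine subspace, dim A = i} P(A)(Ω)^s, the sum running over all i-dimensional affine subspaces A of F₂^{2g}. -/

import Mathlib

/-!
Summing over the even characteristics is the same as summing over all of them: an odd theta constant
vanishes (`thetaConst_eq_zero_of_odd`), so for `δ` odd each product `P(δ + V)`, which has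
`θ[δ]` among its factors, vanishes, and so does each of its positive powers. Hence
`∑_{δ even} P^g_{i,s}[δ]` is the sum of `P(δ + V)^s` over all pairs `(δ, V)` with `dim V = i`.
An `i`-dimensional affine subspace `A` is of the form `δ + V` for exactly `2^i` such pairs, because
`V` is the direction of `A` and `δ` is any of its points. This gives
`∑_{δ even} P^g_{i,s}[δ] = 2^i S_{i,s}` (`sum_even_PgiS`), and the factor `2^i` turns `2^{i(i-1)/2}`
into `2^{i(i+1)/2}`.
-/

open scoped BigOperators Classical
open Complex Filter

noncomputable section

/-- A theta characteristic at genus `g`: a pair `(δ', δ'')` with `δ', δ'' ∈ {0,1}^g ≃ 𝔽₂^g`. -/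
abbrev ThetaChar (g : ℕ) : Type := (Fin g → ZMod 2) × (Fin g → ZMod 2)

/-- The real value (0 or 1) of an element of `𝔽₂`. -/
def cVal (a : ZMod 2) : ℝ := (a.val : ℝ)

/-- A theta characteristic is even if `δ'·δ'' ≡ 0 (mod 2)`. -/
abbrev ThetaChar.IsEven {g : ℕ} (δ : ThetaChar g) : Prop := (∑ i, δ.1 i * δ.2 i) = 0

/-- The finite set of all even theta characteristics of genus `g`. -/
def evenChars (g : ℕ) : Finset (ThetaChar g) := Finset.univ.filter fun δ => δ.IsEven

/-- The finite set of all odd theta characteristics of genus `g`. -/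
def oddChars (g : ℕ) : Finset (ThetaChar g) := Finset.univ.filter fun δ => ¬ δ.IsEven

/-- Membership in the Siegel upper half space `𝔥_g`:
a symmetric complex matrix with positive definite imaginary part. -/
def IsSiegel {g : ℕ} (Ω : Matrix (Fin g) (Fin g) ℂ) : Prop :=
  Ω.IsSymm ∧ (Ω.map Complex.im).PosDef

/-- The Riemann theta function with characteristic `δ`. -/
def theta {g : ℕ} (δ : ThetaChar g) (z : Fin g → ℂ) (Ω : Matrix (Fin g) (Fin g) ℂ) : ℂ :=
  ∑' k : Fin g → ℤ,
    Complex.exp ((Real.pi : ℂ) * Complex.I *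
        (∑ i, ∑ j, ((k i : ℂ) + (cVal (δ.1 i) : ℂ) / 2) * Ω i j *
          ((k j : ℂ) + (cVal (δ.1 j) : ℂ) / 2))
      + 2 * (Real.pi : ℂ) * Complex.I *
        (∑ i, ((k i : ℂ) + (cVal (δ.1 i) : ℂ) / 2) * (z i + (cVal (δ.2 i) : ℂ) / 2)))

/-- The theta constant `θ[δ](Ω) = θ[δ](0, Ω)`. -/
def thetaConst {g : ℕ} (δ : ThetaChar g) (Ω : Matrix (Fin g) (Fin g) ℂ) : ℂ :=
  theta δ (fun _ => 0) Ω

/-- `P(δ + V)(Ω) = ∏_{ε ∈ V} θ[δ + ε](Ω)`, the product of theta constants over a coset. -/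
def Pcoset {g : ℕ} (δ : ThetaChar g) (V : Submodule (ZMod 2) (ThetaChar g))
    (Ω : Matrix (Fin g) (Fin g) ℂ) : ℂ :=
  ∏ᶠ ε ∈ (V : Set (ThetaChar g)), thetaConst (δ + ε) Ω

/-- `P^g_{i,s}[δ](Ω) = ∑_{V, dim V = i} P(δ + V)(Ω)^s`, summing over all `i`-dimensional
linear subspaces `V` of `𝔽₂^{2g}`. -/
def PgiS {g : ℕ} (i s : ℕ) (δ : ThetaChar g) (Ω : Matrix (Fin g) (Fin g) ℂ) : ℂ :=
  ∑ᶠ V ∈ {V : Submodule (ZMod 2) (ThetaChar g) | Module.finrank (ZMod 2) ↥V = i},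
    (Pcoset δ V Ω) ^ s

/-- Grushevsky's modular form
`Ξ_G^{(g)}[δ](Ω) = 2^{-g} ∑_{i=0}^{g} (-1)^i 2^{i(i-1)/2} P^g_{i,2^{4-i}}[δ](Ω)`. -/
def XiG {g : ℕ} (δ : ThetaChar g) (Ω : Matrix (Fin g) (Fin g) ℂ) : ℂ :=
  (2 : ℂ)⁻¹ ^ g * ∑ i ∈ Finset.range (g + 1),
    (-1 : ℂ) ^ i * 2 ^ (i * (i - 1) / 2) * PgiS i (2 ^ (4 - i)) δ Ω

/-- `A ⊆ 𝔽₂^{2g}` is an affine subspace of dimension `i`. -/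
def IsAffineSubspaceDim {g : ℕ} (i : ℕ) (A : Set (ThetaChar g)) : Prop :=
  ∃ (δ : ThetaChar g) (V : Submodule (ZMod 2) (ThetaChar g)),
    Module.finrank (ZMod 2) ↥V = i ∧ A = (fun ε => δ + ε) '' (V : Set (ThetaChar g))

/-- `S_{i,s}(Ω) = ∑_{A affine, dim A = i} P(A)(Ω)^s`. -/
def Sig {g : ℕ} (i s : ℕ) (Ω : Matrix (Fin g) (Fin g) ℂ) : ℂ :=
  ∑ᶠ A ∈ {A : Set (ThetaChar g) | IsAffineSubspaceDim i A},
    (∏ᶠ ε ∈ A, thetaConst ε Ω) ^ s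

/-! ### Vanishing of odd theta constants -/

/-- The involution `k ↦ -k - δ'` of `ℤ^g`, for which `k + δ'/2` changes sign. -/
def reflectChar {g : ℕ} (δ : ThetaChar g) : (Fin g → ℤ) ≃ (Fin g → ℤ) :=
  Equiv.subLeft (fun i => -((δ.1 i).val : ℤ))

/-- Replacing `k` by `-k - δ'` in the theta series multiplies each term by `(-1)^{δ'·δ''}`. -/
lemma thetaConst_eq_zero_of_odd {g : ℕ} (δ : ThetaChar g) (hδ : ¬ δ.IsEven)
    (Ω : Matrix (Fin g) (Fin g) ℂ) : thetaConst δ Ω = 0 := by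
  have hodd : Odd (∑ i, (δ.1 i).val * (δ.2 i).val) := by
    rw [← Nat.not_even_iff_odd, even_iff_two_dvd, ← ZMod.natCast_eq_zero_iff]
    intro h
    apply hδ
    push_cast at h
    simpa using h
  obtain ⟨m, hm⟩ := hodd
  have hm' : (∑ i, ((δ.1 i).val : ℂ) * ((δ.2 i).val : ℂ)) = 2 * m + 1 := by
    exact_mod_cast hm
  have key : thetaConst δ Ω = - thetaConst δ Ω := by
    unfold thetaConst theta
    conv_lhs => rw [← (reflectChar δ).tsum_eq]
    rw [← tsum_neg]
    congr 1
    ext k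
    have hk : ∀ i, ((reflectChar δ k i : ℤ) : ℂ) + ((cVal (δ.1 i) : ℝ) : ℂ) / 2
        = -((k i : ℂ) + ((cVal (δ.1 i) : ℝ) : ℂ) / 2) := by
      intro i
      simp only [reflectChar, Equiv.subLeft_apply, Pi.sub_apply, cVal]
      push_cast
      ring
    simp only [hk]
    -- The two exponents differ by an odd multiple of `πi`.
    have hlin : ∑ i, ((k i : ℂ) + ((cVal (δ.1 i) : ℝ) : ℂ) / 2) *
          (0 + ((cVal (δ.2 i) : ℝ) : ℂ) / 2)
        = ((∑ i, k i * ((δ.2 i).val : ℤ) : ℤ) : ℂ) / 2 + (2 * m + 1) / 4 := by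
      rw [← hm']
      push_cast
      rw [Finset.sum_div, Finset.sum_div, ← Finset.sum_add_distrib]
      refine Finset.sum_congr rfl fun i _ => ?_
      simp only [cVal]
      push_cast
      ring
    have hneg : ∑ i, -((k i : ℂ) + ((cVal (δ.1 i) : ℝ) : ℂ) / 2) *
          (0 + ((cVal (δ.2 i) : ℝ) : ℂ) / 2)
        = -∑ i, ((k i : ℂ) + ((cVal (δ.1 i) : ℝ) : ℂ) / 2) *
          (0 + ((cVal (δ.2 i) : ℝ) : ℂ) / 2) := by
      rw [← Finset.sum_neg_distrib]
      exact Finset.sum_congr rfl fun i _ => by ring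
    have hquad : ∑ i, ∑ j, -((k i : ℂ) + ((cVal (δ.1 i) : ℝ) : ℂ) / 2) * Ω i j *
          -((k j : ℂ) + ((cVal (δ.1 j) : ℝ) : ℂ) / 2)
        = ∑ i, ∑ j, ((k i : ℂ) + ((cVal (δ.1 i) : ℝ) : ℂ) / 2) * Ω i j *
          ((k j : ℂ) + ((cVal (δ.1 j) : ℝ) : ℂ) / 2) :=
      Finset.sum_congr rfl fun i _ => Finset.sum_congr rfl fun j _ => by ring
    rw [hneg, hquad, hlin]
    set N : ℤ := ∑ i, k i * ((δ.2 i).val : ℤ)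
    set Q := ∑ i, ∑ j, ((k i : ℂ) + ((cVal (δ.1 i) : ℝ) : ℂ) / 2) * Ω i j *
          ((k j : ℂ) + ((cVal (δ.1 j) : ℝ) : ℂ) / 2)
    have hexp : (Real.pi : ℂ) * I * Q + 2 * Real.pi * I * -((N : ℂ) / 2 + (2 * m + 1) / 4)
        = ((Real.pi : ℂ) * I * Q + 2 * Real.pi * I * ((N : ℂ) / 2 + (2 * m + 1) / 4))
          + Real.pi * I + ((-N - m - 1 : ℤ) : ℂ) * (2 * Real.pi * I) := by
      push_cast
      ring
    rw [hexp, Complex.exp_add, Complex.exp_int_mul_two_pi_mul_I, Complex.exp_add,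
      Complex.exp_pi_mul_I]
    ring
  exact self_eq_neg.mp key

lemma Pcoset_eq_zero_of_odd {g : ℕ} (δ : ThetaChar g) (hδ : ¬ δ.IsEven)
    (V : Submodule (ZMod 2) (ThetaChar g)) (Ω : Matrix (Fin g) (Fin g) ℂ) :
    Pcoset δ V Ω = 0 := by
  unfold Pcoset
  rw [finprod_mem_eq_finite_toFinset_prod _ (Set.toFinite _)]
  refine Finset.prod_eq_zero (i := 0) (by simp) ?_
  rw [add_zero]
  exact thetaConst_eq_zero_of_odd δ hδ Ω

/-! ### Counting the cosets equal to a given affine subspace -/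

/-- The coset `δ + V` as a set of characteristics. -/
def cosetSet {g : ℕ} (δ : ThetaChar g) (V : Submodule (ZMod 2) (ThetaChar g)) :
    Set (ThetaChar g) :=
  (fun ε => δ + ε) '' (V : Set (ThetaChar g))

lemma mem_cosetSet {g : ℕ} {δ x : ThetaChar g} {V : Submodule (ZMod 2) (ThetaChar g)} :
    x ∈ cosetSet δ V ↔ x - δ ∈ V := by
  constructor
  · rintro ⟨v, hv, rfl⟩
    simpa using hv
  · intro h
    exact ⟨x - δ, h, by simp⟩

/-- A coset determines its direction, and any of its points may serve as base point. -/
lemma cosetSet_eq_iff {g : ℕ} {δ δ₀ : ThetaChar g} {V V₀ : Submodule (ZMod 2) (ThetaChar g)} :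
    cosetSet δ V = cosetSet δ₀ V₀ ↔ δ ∈ cosetSet δ₀ V₀ ∧ V = V₀ := by
  constructor
  · intro h
    have hδ : δ ∈ cosetSet δ₀ V₀ := by
      rw [← h, mem_cosetSet]
      simp
    refine ⟨hδ, ?_⟩
    ext x
    have hx := Set.ext_iff.mp h (δ + x)
    rw [mem_cosetSet, mem_cosetSet, add_sub_cancel_left] at hx
    rw [hx, add_sub_right_comm]
    exact V₀.add_mem_iff_right (mem_cosetSet.mp hδ)
  · rintro ⟨hδ, rfl⟩
    ext x
    rw [mem_cosetSet, mem_cosetSet, ← sub_add_sub_cancel x δ δ₀]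
    exact (V.add_mem_iff_left (mem_cosetSet.mp hδ)).symm

lemma Pcoset_eq {g : ℕ} (δ : ThetaChar g) (V : Submodule (ZMod 2) (ThetaChar g))
    (Ω : Matrix (Fin g) (Fin g) ℂ) :
    Pcoset δ V Ω = ∏ᶠ ε ∈ cosetSet δ V, thetaConst ε Ω := by
  unfold Pcoset cosetSet
  exact (finprod_mem_image (f := fun ε => thetaConst ε Ω) (add_right_injective δ).injOn).symm

/-- Each `i`-dimensional affine subspace is `δ + V` for exactly `2 ^ i` pairs `(δ, V)`. -/
lemma sum_cosets {g : ℕ} (i : ℕ) (F : Set (ThetaChar g) → ℂ) :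
    ∑ δ : ThetaChar g,
      ∑ᶠ V ∈ {V : Submodule (ZMod 2) (ThetaChar g) | Module.finrank (ZMod 2) ↥V = i},
        F (cosetSet δ V)
      = 2 ^ i * ∑ᶠ A ∈ {A : Set (ThetaChar g) | IsAffineSubspaceDim i A}, F A := by
  simp only [finsum_mem_eq_finite_toFinset_sum _ (Set.toFinite _)]
  set 𝒱 := (Set.toFinite
    {V : Submodule (ZMod 2) (ThetaChar g) | Module.finrank (ZMod 2) ↥V = i}).toFinset with h𝒱
  set 𝒜 := (Set.toFinite {A : Set (ThetaChar g) | IsAffineSubspaceDim i A}).toFinset with h𝒜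
  rw [← Finset.sum_product' Finset.univ 𝒱 (fun δ V => F (cosetSet δ V)),
    ← Finset.sum_fiberwise_of_maps_to (t := 𝒜) (g := fun p => cosetSet p.1 p.2), Finset.mul_sum]
  · refine Finset.sum_congr rfl fun A hA => ?_
    rw [Finset.sum_congr rfl (g := fun _ => F A)
      (fun p hp => by rw [(Finset.mem_filter.mp hp).2]), Finset.sum_const, nsmul_eq_mul]
    congr 1
    obtain ⟨δ₀, V₀, hV₀, hA⟩ : IsAffineSubspaceDim i A := by simpa [h𝒜] using hA
    change A = cosetSet δ₀ V₀ at hA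
    have hfib : (Finset.univ ×ˢ 𝒱).filter (fun p => cosetSet p.1 p.2 = A)
        = (Set.toFinite (V₀ : Set (ThetaChar g))).toFinset.image (fun v => (δ₀ + v, V₀)) := by
      ext ⟨δ, V⟩
      simp only [Finset.mem_filter, Finset.mem_product, Finset.mem_univ, true_and, h𝒱,
        Set.Finite.mem_toFinset, Set.mem_ofPred_eq, hA, cosetSet_eq_iff, Finset.mem_image,
        Prod.mk.injEq]
      constructor
      · rintro ⟨-, ⟨v, hv, hvδ⟩, rfl⟩
        exact ⟨v, hv, hvδ, rfl⟩
      · rintro ⟨v, hv, hvδ, rfl⟩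
        exact ⟨hV₀, ⟨v, hv, hvδ⟩, rfl⟩
    rw [hfib, Finset.card_image_of_injective _ (fun a b h => by simpa using h),
      ← Set.ncard_eq_toFinset_card]
    have hcard : (V₀ : Set (ThetaChar g)).ncard = 2 ^ i := by
      rw [← Nat.card_coe_set_eq]
      have := Module.natCard_eq_pow_finrank (K := ZMod 2) (V := V₀)
      rw [hV₀, Nat.card_zmod] at this
      exact this
    rw [hcard]
    push_cast
    rfl
  · rintro ⟨δ, V⟩ hp
    simp only [h𝒱, h𝒜, Finset.mem_product, Finset.mem_univ, true_and, Set.Finite.mem_toFinset,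
      Set.mem_ofPred_eq] at hp ⊢
    exact ⟨δ, V, hp, rfl⟩

lemma sum_even_PgiS {g : ℕ} (i s : ℕ) (hs : s ≠ 0) (Ω : Matrix (Fin g) (Fin g) ℂ) :
    ∑ δ ∈ evenChars g, PgiS i s δ Ω = 2 ^ i * Sig i s Ω := by
  have hall : ∑ δ ∈ evenChars g, PgiS i s δ Ω = ∑ δ : ThetaChar g, PgiS i s δ Ω := by
    refine Finset.sum_subset (Finset.subset_univ _) fun δ _ hδ => ?_
    have hδ' : ¬ δ.IsEven := fun h => hδ (by simpa [evenChars] using h)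
    unfold PgiS
    simp [Pcoset_eq_zero_of_odd δ hδ', hs]
  rw [hall]
  unfold PgiS Sig
  simp only [Pcoset_eq]
  exact sum_cosets i (fun A => (∏ᶠ ε ∈ A, thetaConst ε Ω) ^ s)

theorem statement1 (g : ℕ) (hg1 : 1 ≤ g) (hg4 : g ≤ 4)
    (Ω : Matrix (Fin g) (Fin g) ℂ) (hΩ : IsSiegel Ω) :
    ∑ δ ∈ evenChars g, XiG δ Ω
      = (2 : ℂ)⁻¹ ^ g * ∑ i ∈ Finset.range (g + 1),
          (-1 : ℂ) ^ i * 2 ^ (i * (i + 1) / 2) * Sig i (2 ^ (4 - i)) Ω := by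
  unfold XiG
  rw [← Finset.mul_sum, Finset.sum_comm]
  congr 1
  refine Finset.sum_congr rfl fun i _ => ?_
  rw [← Finset.mul_sum, sum_even_PgiS i _ (by positivity)]
  have hpow : i * (i + 1) / 2 = i * (i - 1) / 2 + i := by
    rw [← Nat.add_mul_div_right _ _ (by norm_num : 0 < 2)]
    congr 1
    cases i with
    | zero => rfl
    | succ n => simp only [Nat.add_sub_cancel]; ring
  rw [hpow, pow_add]
  ring
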